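/- arXiv:2309.11788 — 2 statements merged into one kernel-verified Lean document; each statement's English description precedes it below -/
import Mathlib

section
/- For every permutation π ∈ S_n, the size of the MVP fibre equals the number of valid 1-subgraphs, and is bounded above by the product over all positions of one plus the number of left-inversions: |Fib_n(π)| = |Valid(π)| ≤ ∏_{i=1}^{n} (1 + |LInv(π,i)|), where LInv(π,i) = {j : j < i and π_j > π_i}. -/
/- Common definitions: the classical and MVP parking processes, parking
functions, inversion graphs and 1-subgraphs, Motzkin paths, and sandpile
configurations on complete graphs. Spots, cars and vertices are 0-indexed
(element `i : Fin n` corresponds to the 1-indexed `i+1` of the paper). -/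

namespace MVPPaper

open Finset

variable {n : ℕ}

/-- The first unoccupied spot `k ≥ s` in the occupancy `occ`, if any exists.
`occ k = some i` means spot `k` is occupied by car `i`. -/
def firstFree (occ : Fin n → Option (Fin n)) (s : Fin n) : Option (Fin n) :=
  (List.finRange n).find? fun k => decide (s ≤ k) && (occ k).isNone

/-- One step of the classical parking process: car `i`, preferring spot `s`,
parks in the first free spot `k ≥ s` (failure if none exists). -/
def classicalStep (occ : Fin n → Option (Fin n)) (i s : Fin n) :
    Option (Fin n → Option (Fin n)) :=
  (firstFree occ s).map fun k => Function.update occ k (some i)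

/-- One step of the MVP parking process: car `i` parks in its preferred spot
`s`; if `s` was occupied by an earlier car `j`, then `j` is bumped out and
drives on to the first free spot `k ≥ s` (failure if none exists). -/
def mvpStep (occ : Fin n → Option (Fin n)) (i s : Fin n) :
    Option (Fin n → Option (Fin n)) :=
  match occ s with
  | none => some (Function.update occ s (some i))
  | some j =>
      (firstFree (Function.update occ s (some i)) s).map fun k =>
        Function.update (Function.update occ s (some i)) k (some j)

/-- Run a parking process: cars `0, 1, …, n-1` enter in order, with car `i`
preferring spot `p i`. Returns the final occupancy, or `none` on failure. -/
def runProcess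
    (step : (Fin n → Option (Fin n)) → Fin n → Fin n → Option (Fin n → Option (Fin n)))
    (p : Fin n → Fin n) : Option (Fin n → Option (Fin n)) :=
  List.foldlM (fun occ i => step occ i (p i)) (fun _ => none) (List.finRange n)

def mvpRun (p : Fin n → Fin n) : Option (Fin n → Option (Fin n)) :=
  runProcess mvpStep p

def classicalRun (p : Fin n → Fin n) : Option (Fin n → Option (Fin n)) :=
  runProcess classicalStep p

/-- All cars park successfully under the MVP process. -/
def IsMVPParking (p : Fin n → Fin n) : Prop := (mvpRun p).isSome

/-- All cars park successfully under the classical process. -/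
def IsClassicalParking (p : Fin n → Fin n) : Prop := (classicalRun p).isSome

/-- `MVPOutcome p π` means that the MVP parking process for `p` succeeds, and
car `π i` finally occupies spot `i` for all `i`; that is, `O_MVP(p) = π`. -/
def MVPOutcome (p : Fin n → Fin n) (π : Equiv.Perm (Fin n)) : Prop :=
  ∃ occ, mvpRun p = some occ ∧ ∀ i, occ i = some (π i)

/-- `p` is a parking function: for every `k`, at least `k+1` cars prefer a spot
`≤ k` (the classical counting characterisation, 0-indexed). -/
def IsParkingFunction (p : Fin n → Fin n) : Prop :=
  ∀ k : Fin n, (k : ℕ) + 1 ≤ (univ.filter fun i => p i ≤ k).card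

/-- The fibre of the MVP outcome map over `π`: parking functions with MVP
outcome `π`. -/
def FibMVP (π : Equiv.Perm (Fin n)) : Set (Fin n → Fin n) :=
  {p | IsParkingFunction p ∧ MVPOutcome p π}

/-- The set of inversions of `π` (where `π i` is the car occupying spot `i`):
pairs `(j, i)` with `j < i` and `π j > π i`. These are the edges of the
inversion graph `G_π`. -/
def invFinset (π : Equiv.Perm (Fin n)) : Finset (Fin n × Fin n) :=
  univ.filter fun e => e.1 < e.2 ∧ π e.2 < π e.1

/-- The left-inversions of `π` at `i`. -/
def lInv (π : Equiv.Perm (Fin n)) (i : Fin n) : Finset (Fin n) :=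
  univ.filter fun j => j < i ∧ π i < π j

/-- A 1-subgraph of the inversion graph of `π`: a set of inversions with at
most one incident left-arc at each vertex. -/
def IsOneSubgraph (π : Equiv.Perm (Fin n)) (S : Finset (Fin n × Fin n)) : Prop :=
  S ⊆ invFinset π ∧ ∀ i j j' : Fin n, (j, i) ∈ S → (j', i) ∈ S → j = j'

/-- The map `Ψ_{Sub→PF}`: the parking preference `p` where `p (π i) = j` if
`(j, i) ∈ S` (for the unique such `j`), and `p (π i) = i` otherwise. -/
noncomputable def subToPF (π : Equiv.Perm (Fin n)) (S : Finset (Fin n × Fin n)) :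
    Fin n → Fin n := fun c =>
  if h : ∃ j, (j, π.symm c) ∈ S then h.choose else π.symm c

/-- The map `Ψ_{PF→Sub}`: the set of inversions `(j, i)` of `π` with
`p (π i) = j`. -/
def pfToSub (π : Equiv.Perm (Fin n)) (p : Fin n → Fin n) : Finset (Fin n × Fin n) :=
  (invFinset π).filter fun e => p (π e.2) = e.1

/-- A 1-subgraph `S` is valid if the MVP outcome of `Ψ_{Sub→PF}(S)` is `π`. -/
def IsValid (π : Equiv.Perm (Fin n)) (S : Finset (Fin n × Fin n)) : Prop :=
  MVPOutcome (subToPF π S) π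

/-- `π` contains the pattern `321`. -/
def Contains321 (π : Equiv.Perm (Fin n)) : Prop :=
  ∃ i j k : Fin n, i < j ∧ j < k ∧ π k < π j ∧ π j < π i

/-- `π` contains the pattern `3412`. -/
def Contains3412 (π : Equiv.Perm (Fin n)) : Prop :=
  ∃ i j k l : Fin n, i < j ∧ j < k ∧ k < l ∧ π k < π l ∧ π l < π i ∧ π i < π j

/-- `S` is `P⃗₂`-free: there is no triple `i < j < k` with `(i,j) ∈ S` and
`(j,k) ∈ S`. -/
def P2Free (S : Finset (Fin n × Fin n)) : Prop :=
  ¬∃ i j k : Fin n, i < j ∧ j < k ∧ (i, j) ∈ S ∧ (j, k) ∈ S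

/-- `S` is horizontally separated (HS): any two distinct edges `(j,i)` and
`(j',i')` of `S` satisfy `i < j'` or `i' < j`. -/
def IsHS (S : Finset (Fin n × Fin n)) : Prop :=
  ∀ e ∈ S, ∀ e' ∈ S, e ≠ e' → e.2 < e'.1 ∨ e'.2 < e.1

/-- Steps of a Motzkin path: up, horizontal, down. -/
inductive MStep : Type
  | U : MStep
  | H : MStep
  | D : MStep
  deriving DecidableEq

/-- The height change of a step. -/
def stepVal : MStep → ℤ
  | MStep.U => 1
  | MStep.H => 0
  | MStep.D => -1

/-- The number of cars preferring spot `j` in `p`. -/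
def prefCount (p : Fin n → Fin n) (j : Fin n) : ℕ :=
  (univ.filter fun i => p i = j).card

/-- The lattice path `Φ(p)`: step `j` is `U`, `H` or `D` according to whether
spot `j` is preferred by at least two, exactly one, or no cars. -/
def Phi (p : Fin n → Fin n) : Fin n → MStep := fun j =>
  if 2 ≤ prefCount p j then MStep.U
  else if prefCount p j = 1 then MStep.H
  else MStep.D

/-- An `n`-step lattice path is a Motzkin path: it ends at height `0` and no
prefix goes below height `0`. -/
def IsMotzkinPath (φ : Fin n → MStep) : Prop :=
  (∑ j : Fin n, stepVal (φ j)) = 0 ∧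
  ∀ k : Fin n, 0 ≤ ∑ j ∈ univ.filter (fun j : Fin n => j ≤ k), stepVal (φ j)

/-- The decreasing permutation `dec_n = n(n-1)⋯1`: spot `i` gets car `n-1-i`
(0-indexed). -/
def decPerm (n : ℕ) : Equiv.Perm (Fin n) :=
  ⟨Fin.rev, Fin.rev, Fin.rev_rev, Fin.rev_rev⟩

/-- A non-crossing matching arc diagram on `{0, …, n-1}`: arcs go left to
right, each vertex is incident to at most one arc, and no two arcs cross. -/
def IsNonCrossMatching (S : Finset (Fin n × Fin n)) : Prop :=
  (∀ e ∈ S, e.1 < e.2) ∧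
  (∀ e ∈ S, ∀ e' ∈ S, e ≠ e' →
    e.1 ≠ e'.1 ∧ e.1 ≠ e'.2 ∧ e.2 ≠ e'.1 ∧ e.2 ≠ e'.2) ∧
  ¬∃ i j k l : Fin n, i < j ∧ j < k ∧ k < l ∧ (i, k) ∈ S ∧ (j, l) ∈ S

/-- A stable configuration `c` (grain counts, each `< n`) on the complete graph
`K_n` is recurrent; by Dhar's burning criterion this amounts on `K_n` to the
existence of an ordering `v` of the vertices with `c (v k) ≥ n - (k+1)` for
every `k` (0-indexed). -/
def IsRecurrentK (c : Fin n → ℕ) : Prop :=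
  (∀ i, c i < n) ∧ ∃ v : Equiv.Perm (Fin n), ∀ k : Fin n, n ≤ c (v k) + (k : ℕ) + 1

/-! Under the MVP rule the label of the car on a given spot never decreases, and cars only move to
the right. Hence in the final outcome `π` the car `π i` prefers a spot `p (π i) ≤ i` whose final
occupant is `π i` itself or a later car, so either `p (π i) = i` or `(p (π i), i)` is an inversion.
The preferences of this shape are in bijection with the 1-subgraphs of the inversion graph, by
recording the inversions `(p (π i), i)`, and there are `1 + |LInv(π, i)|` choices for each `i`. -/

theorem firstFree_eq_some {occ : Fin n → Option (Fin n)} {s k : Fin n}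
    (h : firstFree occ s = some k) : s ≤ k ∧ occ k = none := by
  simpa using List.find?_some h

section Step

variable {occ occ' : Fin n → Option (Fin n)} {i s : Fin n}

theorem mvpStep_eq_some (h : mvpStep occ i s = some occ') :
    (occ s = none ∧ occ' = Function.update occ s (some i)) ∨
      ∃ j k, occ s = some j ∧ s < k ∧ occ k = none ∧
        occ' = Function.update (Function.update occ s (some i)) k (some j) := by
  unfold mvpStep at h
  split at h
  next hs => exact Or.inl ⟨hs, (Option.some.inj h).symm⟩
  next j hs =>
    obtain ⟨k, hk, rfl⟩ := Option.map_eq_some_iff.1 h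
    obtain ⟨hsk, hfree⟩ := firstFree_eq_some hk
    have hne : k ≠ s := by
      rintro rfl
      simp at hfree
    rw [Function.update_of_ne hne] at hfree
    exact Or.inr ⟨j, k, hs, hsk.lt_of_ne hne.symm, hfree, rfl⟩

theorem mvpStep_apply_pref (h : mvpStep occ i s = some occ') : occ' s = some i := by
  obtain ⟨-, rfl⟩ | ⟨j, k, -, hsk, -, rfl⟩ := mvpStep_eq_some h
  · exact Function.update_self ..
  · rw [Function.update_of_ne hsk.ne, Function.update_self]

theorem mvpStep_apply_of_ne (h : mvpStep occ i s = some occ') {k c : Fin n} (hks : k ≠ s)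
    (hk : occ k = some c) : occ' k = some c := by
  obtain ⟨-, rfl⟩ | ⟨j, l, -, -, hl, rfl⟩ := mvpStep_eq_some h
  · rwa [Function.update_of_ne hks]
  · have hkl : k ≠ l := by
      rintro rfl
      simp [hl] at hk
    rwa [Function.update_of_ne hkl, Function.update_of_ne hks]

theorem mvpStep_exists_ge (h : mvpStep occ i s = some occ') {k c : Fin n} (hk : occ k = some c)
    (hc : c ≤ i) : ∃ c' ≥ c, occ' k = some c' := by
  obtain rfl | hks := eq_or_ne k s
  · exact ⟨i, hc, mvpStep_apply_pref h⟩
  · exact ⟨c, le_rfl, mvpStep_apply_of_ne h hks hk⟩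

theorem mvpStep_eq_or_exists_le (h : mvpStep occ i s = some occ') {k c : Fin n}
    (hk : occ' k = some c) : (k = s ∧ c = i) ∨ ∃ k₀ ≤ k, occ k₀ = some c := by
  obtain rfl | hks := eq_or_ne k s
  · exact Or.inl ⟨rfl, Option.some.inj (hk.symm.trans (mvpStep_apply_pref h))⟩
  right
  obtain ⟨-, rfl⟩ | ⟨j, l, hj, hsl, -, rfl⟩ := mvpStep_eq_some h
  · exact ⟨k, le_rfl, by rwa [Function.update_of_ne hks] at hk⟩
  · obtain rfl | hkl := eq_or_ne k l
    · rw [Function.update_self] at hk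
      exact ⟨s, hsl.le, hj.trans hk⟩
    · exact ⟨k, le_rfl, by rwa [Function.update_of_ne hkl, Function.update_of_ne hks] at hk⟩

end Step

/-- The invariant of the MVP process: every parked car stands weakly to the right of its preferred
spot, and that spot is occupied by the car itself or by a later one. -/
def MVPInvariant (p : Fin n → Fin n) (occ : Fin n → Option (Fin n)) : Prop :=
  ∀ k c, occ k = some c → p c ≤ k ∧ ∃ c' ≥ c, occ (p c) = some c'

section Outcome

variable {p : Fin n → Fin n} {π : Equiv.Perm (Fin n)}

theorem MVPInvariant.mvpStep {occ occ' : Fin n → Option (Fin n)} {i : Fin n}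
    (hinv : MVPInvariant p occ) (hlt : ∀ k c, occ k = some c → c < i)
    (h : mvpStep occ i (p i) = some occ') : MVPInvariant p occ' := by
  intro k c hk
  obtain ⟨rfl, rfl⟩ | ⟨k₀, hk₀, hc⟩ := mvpStep_eq_or_exists_le h hk
  · exact ⟨le_rfl, c, le_rfl, hk⟩
  · obtain ⟨hle, d, hcd, hd⟩ := hinv k₀ c hc
    obtain ⟨d', hdd', hd'⟩ := mvpStep_exists_ge h hd (hlt _ _ hd).le
    exact ⟨hle.trans hk₀, d', hcd.trans hdd', hd'⟩

theorem MVPInvariant.foldlM_mvpStep {l : List (Fin n)} (hl : l.Pairwise (· < ·))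
    {occ occ' : Fin n → Option (Fin n)} (hinv : MVPInvariant p occ)
    (hlt : ∀ k c, occ k = some c → ∀ i ∈ l, c < i)
    (h : l.foldlM (fun occ i => MVPPaper.mvpStep occ i (p i)) occ = some occ') :
    MVPInvariant p occ' := by
  induction l generalizing occ with
  | nil =>
    obtain rfl : occ = occ' := by simpa using h
    exact hinv
  | cons i l ih =>
    rw [List.foldlM_cons] at h
    obtain ⟨occ₁, hstep, hrest⟩ := Option.bind_eq_some_iff.1 h
    obtain ⟨hil, hl⟩ := List.pairwise_cons.1 hl
    have hlt_i : ∀ k c, occ k = some c → c < i := fun k c hk => hlt k c hk i List.mem_cons_self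
    refine ih hl (hinv.mvpStep hlt_i hstep) (fun k c hk x hx => ?_) hrest
    obtain ⟨-, rfl⟩ | ⟨k₀, -, hk₀⟩ := mvpStep_eq_or_exists_le hstep hk
    · exact hil x hx
    · exact (hlt_i k₀ c hk₀).trans (hil x hx)

theorem mvpInvariant_of_mvpRun_eq_some {occ : Fin n → Option (Fin n)} (h : mvpRun p = some occ) :
    MVPInvariant p occ :=
  MVPInvariant.foldlM_mvpStep (List.sortedLT_finRange n).pairwise (occ := fun _ => none)
    (fun _ _ h => nomatch h) (fun _ _ h => nomatch h) h

theorem MVPOutcome.apply_le (h : MVPOutcome p π) (i : Fin n) : p (π i) ≤ i := by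
  obtain ⟨occ, hrun, hocc⟩ := h
  exact (mvpInvariant_of_mvpRun_eq_some hrun i (π i) (hocc i)).1

theorem MVPOutcome.le_occupant_pref (h : MVPOutcome p π) (i : Fin n) : π i ≤ π (p (π i)) := by
  obtain ⟨occ, hrun, hocc⟩ := h
  obtain ⟨-, c, hc, hpc⟩ := mvpInvariant_of_mvpRun_eq_some hrun i (π i) (hocc i)
  rwa [Option.some.inj ((hocc _).symm.trans hpc)]

theorem isParkingFunction_of_apply_perm_le (h : ∀ i, p (π i) ≤ i) : IsParkingFunction p := by
  intro k
  calc (k : ℕ) + 1 = ((Iic k).map π.toEmbedding).card := by rw [card_map, Fin.card_Iic]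
    _ ≤ (univ.filter fun c => p c ≤ k).card := card_le_card fun c hc => by
      obtain ⟨i, hik, rfl⟩ := mem_map.1 hc
      exact mem_filter.2 ⟨mem_univ _, (h i).trans (mem_Iic.1 hik)⟩

theorem fibMVP_eq_setOf_mvpOutcome (π : Equiv.Perm (Fin n)) :
    FibMVP π = {p | MVPOutcome p π} :=
  Set.ext fun _ => ⟨And.right, fun h => ⟨isParkingFunction_of_apply_perm_le h.apply_le, h⟩⟩

end Outcome

section Subgraph

variable {π : Equiv.Perm (Fin n)} {p : Fin n → Fin n} {S : Finset (Fin n × Fin n)} {i j : Fin n}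

theorem mem_lInv : j ∈ lInv π i ↔ j < i ∧ π i < π j := by
  simp [lInv]

theorem mk_mem_invFinset : (j, i) ∈ invFinset π ↔ j ∈ lInv π i := by
  simp [invFinset, mem_lInv]

theorem notMem_lInv_self : i ∉ lInv π i := fun h => lt_irrefl i (mem_lInv.1 h).1

theorem mk_mem_pfToSub : (j, i) ∈ pfToSub π p ↔ j ∈ lInv π i ∧ p (π i) = j := by
  rw [pfToSub, mem_filter, mk_mem_invFinset]

theorem isOneSubgraph_pfToSub (π : Equiv.Perm (Fin n)) (p : Fin n → Fin n) :
    IsOneSubgraph π (pfToSub π p) :=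
  ⟨filter_subset _ _, fun _ _ _ hj hj' =>
    (mk_mem_pfToSub.1 hj).2.symm.trans (mk_mem_pfToSub.1 hj').2⟩

theorem subToPF_apply_of_mem (hS : IsOneSubgraph π S) (h : (j, i) ∈ S) :
    subToPF π S (π i) = j := by
  have hex : ∃ j, (j, π.symm (π i)) ∈ S := ⟨j, by rwa [π.symm_apply_apply]⟩
  rw [subToPF, dif_pos hex]
  exact hS.2 (π.symm (π i)) _ _ hex.choose_spec (by rwa [π.symm_apply_apply])

theorem subToPF_apply_of_forall_notMem (h : ∀ j, (j, i) ∉ S) : subToPF π S (π i) = i := by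
  rw [subToPF, dif_neg (by simpa using h), π.symm_apply_apply]

theorem pfToSub_subToPF (hS : IsOneSubgraph π S) : pfToSub π (subToPF π S) = S := by
  ext ⟨j, i⟩
  rw [mk_mem_pfToSub]
  refine ⟨fun ⟨hj, heq⟩ => ?_, fun h => ⟨mk_mem_invFinset.1 (hS.1 h), subToPF_apply_of_mem hS h⟩⟩
  by_cases hex : ∃ k, (k, i) ∈ S
  · obtain ⟨k, hk⟩ := hex
    rwa [← heq, subToPF_apply_of_mem hS hk]
  · rw [subToPF_apply_of_forall_notMem (not_exists.1 hex)] at heq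
    exact absurd (heq ▸ hj) notMem_lInv_self

/-- The preferences for which the car `π i` prefers spot `i` or a left-inversion of `π` at `i`,
for every `i`. They are indexed by cars, hence the `π.symm`. -/
def leftInversionPrefs (π : Equiv.Perm (Fin n)) : Finset (Fin n → Fin n) :=
  Fintype.piFinset fun c => insert (π.symm c) (lInv π (π.symm c))

theorem mem_leftInversionPrefs :
    p ∈ leftInversionPrefs π ↔ ∀ i, p (π i) = i ∨ p (π i) ∈ lInv π i := by
  rw [leftInversionPrefs, Fintype.mem_piFinset, ← π.forall_congr_right]
  simp only [π.symm_apply_apply, mem_insert]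

theorem card_leftInversionPrefs (π : Equiv.Perm (Fin n)) :
    (leftInversionPrefs π).card = ∏ i, (1 + (lInv π i).card) := by
  rw [leftInversionPrefs, Fintype.card_piFinset, ← Equiv.prod_comp π]
  simp only [π.symm_apply_apply, card_insert_of_notMem notMem_lInv_self, add_comm]

theorem MVPOutcome.mem_leftInversionPrefs (h : MVPOutcome p π) : p ∈ leftInversionPrefs π := by
  refine MVPPaper.mem_leftInversionPrefs.2 fun i => or_iff_not_imp_left.2 fun hne => ?_
  exact mem_lInv.2 ⟨(h.apply_le i).lt_of_ne hne,
    (h.le_occupant_pref i).lt_of_ne (π.injective.ne (Ne.symm hne))⟩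

theorem subToPF_mem_leftInversionPrefs (hS : IsOneSubgraph π S) :
    subToPF π S ∈ leftInversionPrefs π := by
  refine mem_leftInversionPrefs.2 fun i => ?_
  by_cases hex : ∃ j, (j, i) ∈ S
  · obtain ⟨j, hj⟩ := hex
    rw [subToPF_apply_of_mem hS hj]
    exact Or.inr (mk_mem_invFinset.1 (hS.1 hj))
  · exact Or.inl (subToPF_apply_of_forall_notMem (not_exists.1 hex))

theorem subToPF_pfToSub (hp : p ∈ leftInversionPrefs π) : subToPF π (pfToSub π p) = p := by
  funext c
  obtain ⟨i, rfl⟩ := π.surjective c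
  obtain hi | hi := mem_leftInversionPrefs.1 hp i
  · rw [hi]
    refine subToPF_apply_of_forall_notMem fun j hj => ?_
    obtain ⟨hinv, rfl⟩ := mk_mem_pfToSub.1 hj
    exact notMem_lInv_self (hi ▸ hinv)
  · exact subToPF_apply_of_mem (isOneSubgraph_pfToSub π p) (mk_mem_pfToSub.2 ⟨hi, rfl⟩)

end Subgraph

theorem bijOn_subToPF_leftInversionPrefs (π : Equiv.Perm (Fin n)) :
    Set.BijOn (subToPF π) {S | IsOneSubgraph π S} (leftInversionPrefs π) :=
  Set.InvOn.bijOn (f' := pfToSub π)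
    ⟨fun _ => pfToSub_subToPF, fun _ => subToPF_pfToSub⟩
    (fun _ => subToPF_mem_leftInversionPrefs) fun p _ => isOneSubgraph_pfToSub π p

theorem bijOn_subToPF_fibMVP (π : Equiv.Perm (Fin n)) :
    Set.BijOn (subToPF π) {S | IsOneSubgraph π S ∧ IsValid π S} (FibMVP π) := by
  rw [fibMVP_eq_setOf_mvpOutcome]
  exact (bijOn_subToPF_leftInversionPrefs π).subset_right
    fun _ => MVPOutcome.mem_leftInversionPrefs

theorem ncard_setOf_isOneSubgraph (π : Equiv.Perm (Fin n)) :
    {S | IsOneSubgraph π S}.ncard = ∏ i, (1 + (lInv π i).card) := by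
  rw [(bijOn_subToPF_leftInversionPrefs π).ncard_eq, Set.ncard_coe_finset, card_leftInversionPrefs]

/-- `|Fib_n(π)| = |Valid(π)| ≤ ∏ᵢ (1 + |LInv(π,i)|)`. -/
theorem statement2 (n : ℕ) (π : Equiv.Perm (Fin n)) :
    (FibMVP π).ncard =
      {S : Finset (Fin n × Fin n) | IsOneSubgraph π S ∧ IsValid π S}.ncard ∧
    {S : Finset (Fin n × Fin n) | IsOneSubgraph π S ∧ IsValid π S}.ncard ≤
      ∏ i : Fin n, (1 + (lInv π i).card) := by
  refine ⟨(bijOn_subToPF_fibMVP π).ncard_eq.symm, ?_⟩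
  rw [← ncard_setOf_isOneSubgraph]
  exact Set.ncard_le_ncard fun _ hS => hS.1

end MVPPaper
end

section
/- The map Φ induces a bijection from the set of equivalence classes of Motzkin parking functions of length n under rearrangement onto the set Motz_n of Motzkin paths of length n: (i) for Motzkin parking functions p, p', Φ(p) = Φ(p') if and only if p and p' are rearrangements of each other (have the same multiset of entries); (ii) for every Motzkin path φ of length n there exists a Motzkin parking function p of length n with Φ(p) = φ. -/
/- Common definitions: the classical and MVP parking processes, parking
functions, inversion graphs and 1-subgraphs, Motzkin paths, and sandpile
configurations on complete graphs. Spots, cars and vertices are 0-indexed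
(element `i : Fin n` corresponds to the 1-indexed `i+1` of the paper). -/

namespace MVPPaper

open Finset

variable {n : ℕ}

/-
Let `stepCount s` be `2`, `1` or `0` for `s = U`, `H` or `D`, so that `s` changes the height by
`stepCount s - 1`. Replacing preference counts by `stepCount` of the steps of `Φ(p)` truncates them
at `2`. As the counts of `p` sum to `n`, the path `Φ(p)` returns to height `0` exactly when nothing
was truncated, and then its height after step `k` is the number of cars preferring a spot `≤ k`
minus the number of those spots. Hence `Φ(p)` is a Motzkin path iff `p` is a Motzkin parking
function. Moreover `Φ(p)` then records all the preference counts, which determine `p` up to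
rearrangement, and any counts with sum `n` occur.
-/

section Fibers

variable {α β : Type*} [Fintype α] [DecidableEq β]

lemma forall_card_fiber_eq_iff_exists_perm (f g : α → β) :
    (∀ b, #{a | f a = b} = #{a | g a = b}) ↔ ∃ σ : Equiv.Perm α, g = f ∘ σ := by
  constructor
  · intro h
    let e (b : β) : {a // g a = b} ≃ {a // f a = b} :=
      Fintype.equivOfCardEq (by simp only [Fintype.card_subtype, h])
    exact ⟨Equiv.ofFiberEquiv e, funext fun a => (Equiv.ofFiberEquiv_map e a).symm⟩
  · rintro ⟨σ, rfl⟩ b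
    exact (card_equiv σ (by simp)).symm

lemma exists_card_fiber_eq [Fintype β] (c : β → ℕ) (hc : ∑ b, c b = Fintype.card α) :
    ∃ f : α → β, ∀ b, #{a | f a = b} = c b := by
  let e : α ≃ Σ b, Fin (c b) := Fintype.equivOfCardEq (by simp [hc])
  refine ⟨fun a => (e a).1, fun b => ?_⟩
  calc #{a | (e a).1 = b} = Fintype.card {a // (e a).1 = b} := (Fintype.card_subtype _).symm
    _ = Fintype.card {x : Σ b, Fin (c b) // x.1 = b} :=
        Fintype.card_congr (e.subtypeEquiv fun _ => Iff.rfl)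
    _ = Fintype.card (Fin (c b)) := Fintype.card_congr (Equiv.sigmaSubtype b)
    _ = c b := Fintype.card_fin _

end Fibers

/-- The number of cars preferring a spot whose step is `s`, in a preference with at most two cars
per spot. -/
def stepCount : MStep → ℕ
  | MStep.U => 2
  | MStep.H => 1
  | MStep.D => 0

lemma stepCount_le_two (s : MStep) : stepCount s ≤ 2 := by
  cases s <;> decide

lemma stepCount_injective : Function.Injective stepCount := by
  intro s t h
  cases s <;> cases t <;> simp_all [stepCount]

lemma sum_stepVal_eq_sub {ι : Type*} (t : Finset ι) (φ : ι → MStep) :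
    ∑ j ∈ t, stepVal (φ j) = (∑ j ∈ t, stepCount (φ j) : ℕ) - #t := by
  have stepVal_eq (s : MStep) : stepVal s = stepCount s - 1 := by cases s <;> rfl
  simp [stepVal_eq]

lemma stepCount_Phi (p : Fin n → Fin n) (j : Fin n) :
    stepCount (Phi p j) = min 2 (prefCount p j) := by
  unfold Phi
  split_ifs <;> simp only [stepCount] <;> omega

lemma sum_prefCount (p : Fin n → Fin n) (t : Finset (Fin n)) :
    ∑ j ∈ t, prefCount p j = #{i | p i ∈ t} :=
  sum_card_fiberwise_eq_card_filter univ t p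

lemma sum_stepVal_Phi_eq_zero_iff (p : Fin n → Fin n) :
    ∑ j, stepVal (Phi p j) = 0 ↔ ∀ j, prefCount p j ≤ 2 := by
  have sum_univ : ∑ j, prefCount p j = n := by simp [sum_prefCount]
  calc ∑ j, stepVal (Phi p j) = 0
      ↔ ∑ j, min 2 (prefCount p j) = ∑ j, prefCount p j := by
        rw [sum_stepVal_eq_sub, sub_eq_zero, Nat.cast_inj, card_fin, sum_univ]
        simp only [stepCount_Phi]
    _ ↔ ∀ j, prefCount p j ≤ 2 := by
        simp [sum_eq_sum_iff_of_le fun j _ => min_le_right 2 (prefCount p j)]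

lemma sum_stepVal_Phi {p : Fin n → Fin n} (hp : ∀ j, prefCount p j ≤ 2) (t : Finset (Fin n)) :
    ∑ j ∈ t, stepVal (Phi p j) = (#{i | p i ∈ t} : ℤ) - #t := by
  simp only [sum_stepVal_eq_sub, stepCount_Phi, min_eq_right (hp _), sum_prefCount]

lemma isMotzkinPath_Phi_iff (p : Fin n → Fin n) :
    IsMotzkinPath (Phi p) ↔ IsParkingFunction p ∧ ∀ j, prefCount p j ≤ 2 := by
  rw [IsMotzkinPath, sum_stepVal_Phi_eq_zero_iff, and_comm]
  refine and_congr_left fun hp => forall_congr' fun k => ?_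
  rw [sum_stepVal_Phi hp, filter_ge_eq_Iic, Fin.card_Iic, sub_nonneg, Nat.cast_le]
  simp only [mem_Iic]

lemma Phi_eq_Phi_iff_exists_perm {p p' : Fin n → Fin n} (hp : ∀ j, prefCount p j ≤ 2) :
    Phi p = Phi p' ↔ ∃ σ : Equiv.Perm (Fin n), p' = p ∘ σ := by
  rw [← forall_card_fiber_eq_iff_exists_perm]
  change Phi p = Phi p' ↔ ∀ j, prefCount p j = prefCount p' j
  constructor
  · intro h j
    have hp' : ∀ j, prefCount p' j ≤ 2 := by
      rwa [← sum_stepVal_Phi_eq_zero_iff, ← h, sum_stepVal_Phi_eq_zero_iff]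
    have hj := congrArg stepCount (congrFun h j)
    rwa [stepCount_Phi, stepCount_Phi, min_eq_right (hp j), min_eq_right (hp' j)] at hj
  · intro h
    funext j
    simp only [Phi, h j]

lemma exists_Phi_eq {φ : Fin n → MStep} (hφ : ∑ j, stepVal (φ j) = 0) :
    ∃ p, Phi p = φ := by
  have hsum : ∑ j, stepCount (φ j) = Fintype.card (Fin n) := by
    rwa [sum_stepVal_eq_sub, sub_eq_zero, Nat.cast_inj] at hφ
  obtain ⟨p, hp⟩ := exists_card_fiber_eq (fun j => stepCount (φ j)) hsum
  refine ⟨p, funext fun j => stepCount_injective ?_⟩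
  rw [stepCount_Phi, prefCount, hp, min_eq_right (stepCount_le_two _)]

theorem statement9_general (n : ℕ) :
    (∀ p p' : Fin n → Fin n, (∀ j, prefCount p j ≤ 2) →
      (Phi p = Phi p' ↔ ∃ σ : Equiv.Perm (Fin n), p' = p ∘ σ)) ∧
    (∀ φ : Fin n → MStep, ∑ j, stepVal (φ j) = 0 → ∃ p, Phi p = φ) ∧
    ∀ p : Fin n → Fin n,
      IsMotzkinPath (Phi p) ↔ IsParkingFunction p ∧ ∀ j, prefCount p j ≤ 2 :=
  ⟨fun _ _ => Phi_eq_Phi_iff_exists_perm, fun _ => exists_Phi_eq, isMotzkinPath_Phi_iff⟩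

/-- `Φ` induces a bijection from rearrangement classes of Motzkin
parking functions onto Motzkin paths: (i) two Motzkin parking functions have
the same image under `Φ` iff they are rearrangements of each other; (ii) every
Motzkin path is the image of some Motzkin parking function. -/
theorem statement9 (n : ℕ) :
    (∀ p p' : Fin n → Fin n,
      IsParkingFunction p → (∀ j, prefCount p j ≤ 2) →
      IsParkingFunction p' → (∀ j, prefCount p' j ≤ 2) →
      (Phi p = Phi p' ↔ ∃ σ : Equiv.Perm (Fin n), p' = p ∘ σ)) ∧
    (∀ φ : Fin n → MStep, IsMotzkinPath φ →
      ∃ p : Fin n → Fin n, IsParkingFunction p ∧ (∀ j, prefCount p j ≤ 2) ∧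
        Phi p = φ) := by
  obtain ⟨hperm, hsurj, hmotz⟩ := statement9_general n
  exact ⟨fun p p' _ hp _ _ => hperm p p' hp, fun φ hφ =>
    (hsurj φ hφ.1).imp fun p hp => and_assoc.1 ⟨(hmotz p).1 (by rwa [hp]), hp⟩⟩

end MVPPaper
end
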